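/- (Theorem 2.2, equivalence of the reformulation.) Let p be a real polynomial in D variables of total degree at most d, written p(x) = Σ_{|n|≤d} p_n x^n, and let L ≥ 1. Define the objective f(μ) = Σ_{|n|≤d} p_n Σ_{l=1}^L ∏_{i=1}^D μ_{i,n_i}^{(l)} on the feasible set F_L. Then: (i) for every μ ∈ F_L one has f(μ) ≥ min_{x ∈ [-1,1]^D} p(x), and (ii) there exists μ* ∈ F_L with f(μ*) = min_{x ∈ [-1,1]^D} p(x). In other words, the reformulated problem and the problem of minimizing p over [-1,1]^D share the same global minimum value. -/

import Mathlib

open MeasureTheory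

/-- The degree-`d` moment matrix `𝓜_d(μ)` with entries `μ (m+n)`. -/
noncomputable def momentMatrix (d : ℕ) (μ : ℕ → ℝ) : Matrix (Fin (d+1)) (Fin (d+1)) ℝ :=
  fun m n => μ (m.1 + n.1)

/-- The localized moment matrix `𝓜_{d-1}(μ; 1 - x²)` with entries `μ (m+n) - μ (m+n+2)`. -/
noncomputable def locMomentMatrix (d : ℕ) (μ : ℕ → ℝ) : Matrix (Fin d) (Fin d) ℝ :=
  fun m n => μ (m.1 + n.1) - μ (m.1 + n.1 + 2)

/-- The feasible set `F_L`: all the moment matrices `𝓜_d(μ_i^{(l)})` and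
`𝓜_{d-1}(μ_i^{(l)}; 1-x²)` are PSD and `Σ_l ∏_i μ_{i,0}^{(l)} = 1`. -/
def Feasible (D d L : ℕ) (μ : Fin L → Fin D → ℕ → ℝ) : Prop :=
  (∀ l i, (momentMatrix d (μ l i)).PosSemidef) ∧
  (∀ l i, (locMomentMatrix d (μ l i)).PosSemidef) ∧
  (∑ l, ∏ i, μ l i 0) = 1

/-- The hypercube `[-1,1]^D` in `ℝ^D`. -/
def cube (D : ℕ) : Set (Fin D → ℝ) := Set.univ.pi fun _ => Set.Icc (-1) 1

/-- The reformulated objective `f(μ) = Σ_n p_n Σ_l ∏_i μ_{i,n_i}^{(l)}`. -/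
noncomputable def objective (D L : ℕ) (p : MvPolynomial (Fin D) ℝ)
    (μ : Fin L → Fin D → ℕ → ℝ) : ℝ :=
  ∑ n ∈ p.support, p.coeff n * ∑ l, ∏ i, μ l i (n i)

/-- The global minimum value of `p` over the hypercube `[-1,1]^D`. -/
noncomputable def minVal (D : ℕ) (p : MvPolynomial (Fin D) ℝ) : ℝ :=
  sInf ((fun x => MvPolynomial.eval x p) '' cube D)

open Polynomial in
/-- The degree-`2k` truncation of the quadratic module of `1 - X²`: sums of terms `r²` and
`(1 - X²) r²` of degree at most `2k`. -/
inductive TruncatedCone (k : ℕ) : ℝ[X] → Prop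
  | sq (r : ℝ[X]) (hr : r.natDegree ≤ k) : TruncatedCone k (r ^ 2)
  | loc (r : ℝ[X]) (hr : r.natDegree + 1 ≤ k) : TruncatedCone k ((1 - X ^ 2) * r ^ 2)
  | add {p q : ℝ[X]} (hp : TruncatedCone k p) (hq : TruncatedCone k q) : TruncatedCone k (p + q)

namespace TruncatedCone

open Polynomial

variable {j k : ℕ} {p q : ℝ[X]}

theorem mono (hp : TruncatedCone j p) (h : j ≤ k) : TruncatedCone k p := by
  induction hp with
  | sq r hr => exact sq r (hr.trans h)
  | loc r hr => exact loc r (hr.trans h)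
  | add _ _ ihp ihq => exact ihp.add ihq

theorem mul (hp : TruncatedCone j p) (hq : TruncatedCone k q) : TruncatedCone (j + k) (p * q) := by
  induction hp with
  | add _ _ ih₁ ih₂ => rw [add_mul]; exact ih₁.add ih₂
  | sq r hr =>
    induction hq with
    | add _ _ ih₁ ih₂ => rw [mul_add]; exact ih₁.add ih₂
    | sq s hs =>
      rw [← mul_pow]
      exact sq _ (natDegree_mul_le.trans (by lia))
    | loc s hs =>
      rw [show r ^ 2 * ((1 - X ^ 2) * s ^ 2) = (1 - X ^ 2) * (r * s) ^ 2 by ring]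
      have := natDegree_mul_le (p := r) (q := s)
      exact loc _ (by lia)
  | loc r hr =>
    induction hq with
    | add _ _ ih₁ ih₂ => rw [mul_add]; exact ih₁.add ih₂
    | sq s hs =>
      rw [show (1 - X ^ 2) * r ^ 2 * s ^ 2 = (1 - X ^ 2) * (r * s) ^ 2 by ring]
      have := natDegree_mul_le (p := r) (q := s)
      exact loc _ (by lia)
    | loc s hs =>
      rw [show (1 - X ^ 2) * r ^ 2 * ((1 - X ^ 2) * s ^ 2) = ((1 - X ^ 2) * (r * s)) ^ 2 by ring]
      have h₁ := natDegree_mul_le (p := r) (q := s)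
      have h₂ := natDegree_mul_le (p := (1 - X ^ 2 : ℝ[X])) (q := r * s)
      have h₃ : (1 - X ^ 2 : ℝ[X]).natDegree ≤ 2 := by compute_degree
      exact sq _ (by lia)

theorem const {c : ℝ} (hc : 0 ≤ c) : TruncatedCone k (C c) := by
  rw [← Real.sq_sqrt hc, C_pow]
  exact sq _ (by simp)

theorem const_add_X {c : ℝ} (hc : 1 ≤ c) : TruncatedCone 1 (X + C c) := by
  have hs : (C (√2⁻¹) : ℝ[X]) ^ 2 = C 2⁻¹ := by rw [← C_pow, Real.sq_sqrt (by norm_num)]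
  have h₂ : (C (2⁻¹ : ℝ) : ℝ[X]) * 2 = 1 := by
    rw [show (2 : ℝ[X]) = C 2 from rfl, ← C_mul]; norm_num
  have h : (X + C c : ℝ[X]) =
      (C (√2⁻¹) * (1 + X)) ^ 2 + (1 - X ^ 2) * C (√2⁻¹) ^ 2 + C (c - 1) := by
    rw [mul_pow, hs, C_sub, C_1]
    linear_combination -(1 + X) * h₂
  rw [h]
  refine ((sq _ ?_).add (loc _ ?_)).add (const (by linarith))
  · compute_degree
  · simp

theorem const_sub_X {c : ℝ} (hc : 1 ≤ c) : TruncatedCone 1 (C c - X) := by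
  have hs : (C (√2⁻¹) : ℝ[X]) ^ 2 = C 2⁻¹ := by rw [← C_pow, Real.sq_sqrt (by norm_num)]
  have h₂ : (C (2⁻¹ : ℝ) : ℝ[X]) * 2 = 1 := by
    rw [show (2 : ℝ[X]) = C 2 from rfl, ← C_mul]; norm_num
  have h : (C c - X : ℝ[X]) =
      (C (√2⁻¹) * (1 - X)) ^ 2 + (1 - X ^ 2) * C (√2⁻¹) ^ 2 + C (c - 1) := by
    rw [mul_pow, hs, C_sub, C_1]
    linear_combination -(1 - X) * h₂
  rw [h]
  refine ((sq _ ?_).add (loc _ ?_)).add (const (by linarith))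
  · compute_degree
  · simp

end TruncatedCone

section Nonneg

open Polynomial

/-- Nonnegativity of a polynomial on `[-1,1]` may be checked away from one point. -/
theorem eval_nonneg_on_Icc_of_ne {r : ℝ[X]} (a : ℝ)
    (h : ∀ t ∈ Set.Icc (-1 : ℝ) 1, t ≠ a → 0 ≤ r.eval t) :
    ∀ t ∈ Set.Icc (-1 : ℝ) 1, 0 ≤ r.eval t := by
  have hclosed : IsClosed {t : ℝ | 0 ≤ r.eval t} := isClosed_le continuous_const r.continuous
  have hsub : Set.Ioo (-1 : ℝ) 1 ⊆ {t : ℝ | 0 ≤ r.eval t} :=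
    ((dense_compl_singleton a).open_subset_closure_inter isOpen_Ioo).trans
      (closure_minimal (fun t ht => h t (Set.Ioo_subset_Icc_self ht.1) ht.2) hclosed)
  intro t ht
  rw [← closure_Ioo (by norm_num : (-1 : ℝ) ≠ 1)] at ht
  exact closure_minimal hsub hclosed ht

theorem sq_dvd_of_nonneg_of_isRoot {q : ℝ[X]} (hq : ∀ t ∈ Set.Icc (-1 : ℝ) 1, 0 ≤ q.eval t)
    {a : ℝ} (ha : a ∈ Set.Ioo (-1 : ℝ) 1) (hroot : q.IsRoot a) : (X - C a) ^ 2 ∣ q := by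
  obtain ⟨r, rfl⟩ := dvd_iff_isRoot.2 hroot
  have hmin : IsLocalMin (fun t => ((X - C a) * r).eval t) a := by
    filter_upwards [Ioo_mem_nhds ha.1 ha.2] with t ht
    rw [hroot.eq_zero]
    exact hq t (Set.Ioo_subset_Icc_self ht)
  have hd := hmin.deriv_eq_zero
  rw [Polynomial.deriv] at hd
  have hr : r.IsRoot a := by simpa [derivative_mul] using hd
  rw [pow_two]
  exact mul_dvd_mul_left _ (dvd_iff_isRoot.2 hr)

/-- A degree-relaxed Markov–Lukács theorem: a polynomial of degree at most `n` that is nonnegative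
on `[-1,1]` lies in the degree-`2n` truncated cone. -/
theorem truncatedCone_of_nonneg (n : ℕ) (q : ℝ[X]) (hn : q.natDegree ≤ n)
    (hq : ∀ t ∈ Set.Icc (-1 : ℝ) 1, 0 ≤ q.eval t) : TruncatedCone n q := by
  induction n using Nat.strong_induction_on generalizing q with
  | _ n ih =>
  rcases Nat.eq_zero_or_pos q.natDegree with h0 | hpos
  · rw [eq_C_of_natDegree_eq_zero h0] at hq ⊢
    exact .const (by simpa using hq 0 (by simp))
  have hq0 : q ≠ 0 := by rintro rfl; simp at hpos
  have peel : ∀ f g : ℝ[X], q = f * g → 1 ≤ f.natDegree → TruncatedCone 1 f →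
      (∃ a, ∀ t ∈ Set.Icc (-1 : ℝ) 1, t ≠ a → 0 < f.eval t) → TruncatedCone n q := by
    rintro f g rfl hf hcone ⟨a, hfa⟩
    have hdeg := natDegree_mul (left_ne_zero_of_mul hq0) (right_ne_zero_of_mul hq0)
    have hg : TruncatedCone (n - 1) g := by
      refine ih _ (by lia) g (by lia) (eval_nonneg_on_Icc_of_ne a fun t ht hta => ?_)
      have := hq t ht
      rw [eval_mul] at this
      exact nonneg_of_mul_nonneg_right this (hfa t ht hta)
    exact (hcone.mul hg).mono (by lia)
  obtain ⟨z, hz⟩ := Complex.exists_root (f := q.map (algebraMap ℝ ℂ))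
    (by rw [degree_map]; exact natDegree_pos_iff_degree_pos.1 hpos)
  rw [IsRoot, eval_map_algebraMap] at hz
  by_cases him : z.im = 0
  · have hroot : q.IsRoot z.re := by
      have hz' : z = algebraMap ℝ ℂ z.re := Complex.ext (by simp) (by simp [him])
      rw [hz', aeval_algebraMap_apply, map_eq_zero] at hz
      simpa using hz
    generalize z.re = a at hroot
    obtain ⟨g, hg⟩ := dvd_iff_isRoot.2 hroot
    rcases le_or_gt a (-1) with ha | ha
    · refine peel _ g hg (by simp) ?_ ⟨a, fun t ht hta => ?_⟩
      · simpa [sub_eq_add_neg] using TruncatedCone.const_add_X (c := -a) (by linarith)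
      · have : a < t := lt_of_le_of_ne (ha.trans ht.1) hta.symm
        simpa using this
    rcases le_or_gt 1 a with ha' | ha'
    · refine peel (C a - X) (-g) (by rw [hg]; ring) ?_ (.const_sub_X ha') ⟨a, fun t ht hta => ?_⟩
      · rw [← natDegree_neg]; simp
      · have : t < a := lt_of_le_of_ne (ht.2.trans ha') hta
        simpa using this
    obtain ⟨g, hg⟩ := sq_dvd_of_nonneg_of_isRoot hq ⟨ha, ha'⟩ hroot
    refine peel _ g hg (by simp) (.sq _ (by simp)) ⟨a, fun t _ hta => ?_⟩
    have : t - a ≠ 0 := sub_ne_zero.2 hta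
    simp only [eval_pow, eval_sub, eval_X, eval_C]
    positivity
  · obtain ⟨g, hg⟩ := q.quadratic_dvd_of_aeval_eq_zero_im_ne_zero hz him
    have hf : (X ^ 2 - C (2 * z.re) * X + C (‖z‖ ^ 2) : ℝ[X]) =
        (X - C z.re) ^ 2 + C (z.im ^ 2) := by
      rw [Complex.sq_norm, Complex.normSq_apply]
      simp only [C_mul, C_add, C_pow, show (C 2 : ℝ[X]) = 2 from rfl]
      ring
    rw [hf] at hg
    refine peel _ g hg ?_ ((TruncatedCone.sq _ (by simp)).add (.const (sq_nonneg _)))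
      ⟨0, fun t _ _ => ?_⟩
    · rw [natDegree_add_C]; simp
    · simp only [eval_add, eval_pow, eval_sub, eval_X, eval_C]
      positivity

/-- The Riesz functional of a sequence `μ`, sending `X ^ n` to `μ n`. -/
noncomputable def rieszFunctional (μ : ℕ → ℝ) : ℝ[X] →ₗ[ℝ] ℝ :=
  lsum fun n => μ n • LinearMap.id

theorem rieszFunctional_C_mul_X_pow (μ : ℕ → ℝ) (c : ℝ) (n : ℕ) :
    rieszFunctional μ (C c * X ^ n) = c * μ n := by
  rw [C_mul_X_pow_eq_monomial]
  change (monomial n c).sum _ = _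
  rw [sum_monomial_index] <;> simp [mul_comm]

theorem rieszFunctional_sq (μ : ℕ → ℝ) {r : ℝ[X]} {k : ℕ} (hr : r.natDegree < k) :
    rieszFunctional μ (r ^ 2) =
      ∑ m : Fin k, ∑ n : Fin k, r.coeff m * (μ (m + n) * r.coeff n) := by
  conv_lhs => rw [pow_two, r.as_sum_range_C_mul_X_pow' hr]
  rw [Finset.sum_mul_sum, map_sum, Finset.sum_range]
  refine Finset.sum_congr rfl fun m _ => ?_
  rw [map_sum, Finset.sum_range]
  refine Finset.sum_congr rfl fun n _ => ?_
  rw [show (C (r.coeff m) * X ^ (m : ℕ) * (C (r.coeff n) * X ^ (n : ℕ)) : ℝ[X]) =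
    C (r.coeff m * r.coeff n) * X ^ (m + n : ℕ) by rw [C_mul]; ring, rieszFunctional_C_mul_X_pow]
  ring

theorem rieszFunctional_one_sub_sq_mul (μ : ℕ → ℝ) (p : ℝ[X]) :
    rieszFunctional μ ((1 - X ^ 2) * p) = rieszFunctional (fun n => μ n - μ (n + 2)) p := by
  induction p using Polynomial.induction_on' with
  | add p q hp hq => rw [mul_add, map_add, map_add, hp, hq]
  | monomial n a =>
    rw [← C_mul_X_pow_eq_monomial, rieszFunctional_C_mul_X_pow,
      show ((1 - X ^ 2) * (C a * X ^ n) : ℝ[X]) = C a * X ^ n - C a * X ^ (n + 2) by ring,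
      map_sub, rieszFunctional_C_mul_X_pow, rieszFunctional_C_mul_X_pow]
    ring

theorem rieszFunctional_nonneg {d : ℕ} {μ : ℕ → ℝ} (h₁ : (momentMatrix d μ).PosSemidef)
    (h₂ : (locMomentMatrix d μ).PosSemidef) {q : ℝ[X]} (hdeg : q.natDegree ≤ d)
    (hq : ∀ t ∈ Set.Icc (-1 : ℝ) 1, 0 ≤ q.eval t) : 0 ≤ rieszFunctional μ q := by
  have hcone := truncatedCone_of_nonneg d q hdeg hq
  clear hdeg hq
  induction hcone with
  | add _ _ ih₁ ih₂ => rw [map_add]; exact add_nonneg ih₁ ih₂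
  | sq r hr =>
    rw [rieszFunctional_sq μ (Nat.lt_succ_of_le hr)]
    simpa [dotProduct, Matrix.mulVec, momentMatrix, Finset.mul_sum] using
      h₁.dotProduct_mulVec_nonneg fun m => r.coeff m
  | loc r hr =>
    rw [rieszFunctional_one_sub_sq_mul, rieszFunctional_sq _ hr]
    simpa [dotProduct, Matrix.mulVec, locMomentMatrix, Finset.mul_sum] using
      h₂.dotProduct_mulVec_nonneg fun m => r.coeff m

end Nonneg

open Polynomial in
/-- Replacing the powers of the variables in `s` by moments preserves a lower bound of `p` on the
cube, up to the product of the zeroth moments. -/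
theorem mul_prod_le_sum_coeff_mul_prod {D d : ℕ} {p : MvPolynomial (Fin D) ℝ}
    (hdeg : p.totalDegree ≤ d) {μ : Fin D → ℕ → ℝ}
    (h₁ : ∀ i, (momentMatrix d (μ i)).PosSemidef)
    (h₂ : ∀ i, (locMomentMatrix d (μ i)).PosSemidef) {m : ℝ}
    (hm : ∀ x ∈ cube D, m ≤ MvPolynomial.eval x p) (s : Finset (Fin D)) :
    ∀ x ∈ cube D, m * ∏ i ∈ s, μ i 0 ≤
      ∑ n ∈ p.support, p.coeff n * ∏ i, if i ∈ s then μ i (n i) else x i ^ n i := by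
  induction s using Finset.induction_on with
  | empty => simpa [MvPolynomial.eval_eq'] using hm
  | insert a s ha ih =>
    intro x hx
    set c : (Fin D →₀ ℕ) → ℝ := fun n =>
      p.coeff n * ∏ i ∈ Finset.univ.erase a, if i ∈ s then μ i (n i) else x i ^ n i with hc
    set q : ℝ[X] := ∑ n ∈ p.support, C (c n) * X ^ n a - C (m * ∏ i ∈ s, μ i 0) * X ^ 0 with hq
    have hqdeg : q.natDegree ≤ d := by
      refine (natDegree_sub_le _ _).trans (max_le (natDegree_sum_le_of_forall_le _ _ fun n hn => ?_)
        ((natDegree_C_mul_X_pow_le _ _).trans d.zero_le))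
      refine (natDegree_C_mul_X_pow_le _ _).trans (le_trans ?_ hdeg)
      exact (MvPolynomial.degreeOf_le_iff.1 le_rfl n hn).trans (p.degreeOf_le_totalDegree a)
    have hqpos : ∀ t ∈ Set.Icc (-1 : ℝ) 1, 0 ≤ q.eval t := by
      intro t ht
      have hx' : Function.update x a t ∈ cube D := by
        intro i _
        rcases eq_or_ne i a with rfl | hi
        · simpa using ht
        · simpa [hi] using hx i trivial
      have := ih _ hx'
      rw [hq, eval_sub, eval_finsetSum, pow_zero, mul_one, eval_C, sub_nonneg]
      refine this.trans_eq (Finset.sum_congr rfl fun n _ => ?_)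
      rw [eval_mul, eval_C, eval_pow, eval_X, hc, ← Finset.prod_erase_mul _ _ (Finset.mem_univ a),
        if_neg ha, Function.update_self, ← mul_assoc]
      congr 2
      refine Finset.prod_congr rfl fun i hi => ?_
      rw [Function.update_of_ne (Finset.ne_of_mem_erase hi)]
    have hpos := rieszFunctional_nonneg (h₁ a) (h₂ a) hqdeg hqpos
    rw [hq, map_sub, map_sum, rieszFunctional_C_mul_X_pow, sub_nonneg] at hpos
    rw [Finset.prod_insert ha, mul_comm (μ a 0), ← mul_assoc]
    refine hpos.trans_eq (Finset.sum_congr rfl fun n _ => ?_)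
    rw [rieszFunctional_C_mul_X_pow, hc, ← Finset.prod_erase_mul _ _ (Finset.mem_univ a),
      if_pos (Finset.mem_insert_self a s), ← mul_assoc]
    congr 2
    refine congrArg _ (Finset.prod_congr rfl fun i hi => ?_)
    simp [Finset.ne_of_mem_erase hi]

theorem exists_mem_cube_isMinOn (D : ℕ) (p : MvPolynomial (Fin D) ℝ) :
    ∃ x ∈ cube D, IsMinOn (fun x => MvPolynomial.eval x p) (cube D) x :=
  (isCompact_univ_pi fun _ => isCompact_Icc).exists_isMinOn ⟨0, fun _ _ => by simp⟩
    (MvPolynomial.continuous_eval p).continuousOn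

theorem momentMatrix_pow_posSemidef (d : ℕ) (x : ℝ) :
    (momentMatrix d fun n => x ^ n).PosSemidef := by
  convert Matrix.posSemidef_vecMulVec_self_star fun m : Fin (d + 1) => x ^ (m : ℕ)
  ext m n
  simp [momentMatrix, Matrix.vecMulVec_apply, pow_add]

theorem locMomentMatrix_pow_posSemidef (d : ℕ) {x : ℝ} (hx : x ∈ Set.Icc (-1 : ℝ) 1) :
    (locMomentMatrix d fun n => x ^ n).PosSemidef := by
  have hx' : 0 ≤ 1 - x ^ 2 := by nlinarith [hx.1, hx.2]
  convert (Matrix.posSemidef_vecMulVec_self_star fun m : Fin d => x ^ (m : ℕ)).smul hx'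
  ext m n
  simp only [locMomentMatrix, Matrix.smul_apply, Matrix.vecMulVec_apply, star_trivial,
    smul_eq_mul]
  ring

/-- Theorem 2.2 (equivalence of the reformulation): the reformulated objective over the
feasible set `F_L` is bounded below by `min_{x ∈ [-1,1]^D} p(x)`, and this value is
attained at some feasible point. -/
theorem statement5 (D d L : ℕ) (hD : 1 ≤ D) (hd : 1 ≤ d) (hL : 1 ≤ L)
    (p : MvPolynomial (Fin D) ℝ) (hdeg : p.totalDegree ≤ d) :
    (∀ μ : Fin L → Fin D → ℕ → ℝ, Feasible D d L μ → minVal D p ≤ objective D L p μ) ∧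
    (∃ μ : Fin L → Fin D → ℕ → ℝ, Feasible D d L μ ∧ objective D L p μ = minVal D p) := by
  obtain ⟨x, hx, hmin⟩ := exists_mem_cube_isMinOn D p
  have hval : minVal D p = MvPolynomial.eval x p :=
    IsLeast.csInf_eq ⟨Set.mem_image_of_mem _ hx, Set.forall_mem_image.2 hmin⟩
  rw [hval]
  refine ⟨fun μ hμ => ?_, ?_⟩
  · obtain ⟨h₁, h₂, hsum⟩ := hμ
    calc MvPolynomial.eval x p = ∑ l, MvPolynomial.eval x p * ∏ i, μ l i 0 := by
          rw [← Finset.mul_sum, hsum, mul_one]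
      _ ≤ ∑ l, ∑ n ∈ p.support, p.coeff n * ∏ i, μ l i (n i) :=
          Finset.sum_le_sum fun l _ => by
            simpa using mul_prod_le_sum_coeff_mul_prod hdeg (h₁ l) (h₂ l)
              (fun y hy => hmin hy) Finset.univ x hx
      _ = objective D L p μ := by
          rw [Finset.sum_comm]
          simp only [objective, Finset.mul_sum]
  · let l₀ : Fin L := ⟨0, hL⟩
    have hprod : ∀ n : Fin D → ℕ,
        ∑ l : Fin L, ∏ i, (if l = l₀ then fun k => x i ^ k else 0 : ℕ → ℝ) (n i) =
          ∏ i, x i ^ n i := by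
      intro n
      rw [Finset.sum_eq_single l₀ (fun l _ hl => ?_) (by simp)]
      · simp
      · exact Finset.prod_eq_zero (Finset.mem_univ ⟨0, hD⟩) (by simp [hl])
    refine ⟨fun l i => if l = l₀ then fun k => x i ^ k else 0, ⟨fun l i => ?_, fun l i => ?_, ?_⟩, ?_⟩
    · beta_reduce
      split_ifs
      · exact momentMatrix_pow_posSemidef d (x i)
      · exact Matrix.PosSemidef.zero
    · beta_reduce
      split_ifs
      · exact locMomentMatrix_pow_posSemidef d (hx i trivial)
      · convert Matrix.PosSemidef.zero
        ext m n
        simp [locMomentMatrix]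
    · simpa using hprod 0
    · rw [objective, MvPolynomial.eval_eq']
      exact Finset.sum_congr rfl fun n _ => by rw [hprod]
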